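/- Let G be a finite subgroup of the orthogonal group O_n(ℝ) and let H be a subgroup of G. Let φ: ℝ[X]^G → ℝ be a ring homomorphism such that φ(∑_{j=1}^n (∂f/∂X_j)²) ≥ 0 for every f ∈ ℝ[X]^G, and suppose φ extends to a ring homomorphism φ_H: ℝ[X]^H → ℝ (i.e., φ_H(f) = φ(f) for all f ∈ ℝ[X]^G). Then φ_H(∑_{j=1}^n (∂h/∂X_j)²) ≥ 0 for every h ∈ ℝ[X]^H. -/

import Mathlib

open MvPolynomial

/-- The action of `σ ∈ GL_n(ℝ)` on real polynomials, `(σ · p)(x) = p(σ⁻¹ x)`,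
given by substituting `X i ↦ ∑ j (σ⁻¹)_{i j} X j`. -/
noncomputable def polyAct {n : ℕ} (σ : Matrix.GeneralLinearGroup (Fin n) ℝ) :
    MvPolynomial (Fin n) ℝ →ₐ[ℝ] MvPolynomial (Fin n) ℝ :=
  aeval fun i => ∑ j, (σ⁻¹).val i j • X j

/-- The subalgebra `ℝ[X]^G` of `G`-invariant polynomials. -/
noncomputable def invariants {n : ℕ} (G : Subgroup (Matrix.GeneralLinearGroup (Fin n) ℝ)) :
    Subalgebra ℝ (MvPolynomial (Fin n) ℝ) where
  carrier := {p | ∀ σ ∈ G, polyAct σ p = p}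
  mul_mem' := fun hp hq σ hσ => by rw [map_mul, hp σ hσ, hq σ hσ]
  one_mem' := fun σ _ => map_one (polyAct σ)
  add_mem' := fun hp hq σ hσ => by rw [map_add, hp σ hσ, hq σ hσ]
  zero_mem' := fun σ _ => map_zero (polyAct σ)
  algebraMap_mem' := fun r σ _ => (polyAct σ).commutes r

/-- The Reynolds operator `R_H(p) = (1/|H|) ∑_{σ ∈ H} σ · p` of a (finite) subgroup `H`. -/
noncomputable def reynolds {n : ℕ} (H : Subgroup (Matrix.GeneralLinearGroup (Fin n) ℝ))
    (p : MvPolynomial (Fin n) ℝ) : MvPolynomial (Fin n) ℝ :=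
  (Nat.card H : ℝ)⁻¹ • ∑ᶠ σ ∈ (H : Set (Matrix.GeneralLinearGroup (Fin n) ℝ)), polyAct σ p

/-- The polynomial `∑_{j=1}^n (∂f/∂X_j)²`. -/
noncomputable def gradSq {n : ℕ} (f : MvPolynomial (Fin n) ℝ) : MvPolynomial (Fin n) ℝ :=
  ∑ j, (pderiv j f) ^ 2

/-!
The homomorphism `φH` is evaluation at a real point, where `gradSq` is a sum of squares. Since
`ℝ[X]` is integral over `ℝ[X]^G`, `φH` extends to evaluation at some `z ∈ ℂⁿ`. To see that `Im z_k`
vanishes, choose a real polynomial `P` with `P'(w) = i · Im w` at every value `w = (τ · X_k)(z)`,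
`τ ∈ G`; this is Lagrange interpolation over `ℝ`, since `w ↦ i · Im w` commutes with conjugation.
Let `A` be the matrix whose rows are the coefficients of the linear forms `τ · X_k`. The invariant
`f = ∑ τ ∈ G, τ · P(X_k)` has gradient `i · Aᵀ A (Im z)` at `z`, so positivity of `φ` gives
`-‖Aᵀ A (Im z)‖² ≥ 0`. Hence `A (Im z) = 0`, and its row at `τ = 1` reads `Im z_k = 0`.
-/

section Extension

variable {k R S L : Type*} [CommRing k] [CommRing R] [CommRing S] [Field L] [IsAlgClosed L]
  [Algebra k R] [Algebra k S] [Algebra k L] [Algebra R S] [IsScalarTower k R S]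

theorem exists_algHom_extending_of_isIntegral [Algebra.IsIntegral R S] [FaithfulSMul R S]
    (φ : R →ₐ[k] L) : ∃ ψ : S →ₐ[k] L, ∀ r, ψ (algebraMap R S r) = φ r := by
  have : (RingHom.ker φ).IsPrime := RingHom.ker_isPrime φ
  obtain ⟨Q, _, _⟩ := Classical.arbitrary ((RingHom.ker φ).primesOver S)
  let : Algebra (R ⧸ RingHom.ker φ) L := (Ideal.kerLiftAlg φ).toAlgebra
  have : FaithfulSMul (R ⧸ RingHom.ker φ) L :=
    (faithfulSMul_iff_algebraMap_injective _ _).2 (Ideal.kerLiftAlg_injective φ)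
  have : IsScalarTower k (R ⧸ RingHom.ker φ) L :=
    .of_algebraMap_eq fun a => ((Ideal.kerLiftAlg φ).commutes a).symm
  have : Module.IsTorsionFree (R ⧸ RingHom.ker φ) (S ⧸ Q) :=
    Module.isTorsionFree_iff_faithfulSMul.2 inferInstance
  let θ : S ⧸ Q →ₐ[R ⧸ RingHom.ker φ] L := IsAlgClosed.lift
  refine ⟨(θ.restrictScalars k).comp (Ideal.Quotient.mkₐ k Q), fun r => ?_⟩
  exact θ.commutes (Ideal.Quotient.mk _ r)

end Extension

section Polynomial

open Polynomial

theorem polynomial_derivative_surjective {K : Type*} [DivisionSemiring K] [CharZero K] :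
    Function.Surjective (derivative : K[X] →ₗ[K] K[X]) := by
  intro q
  induction q using Polynomial.induction_on' with
  | add p q hp hq =>
    obtain ⟨P, rfl⟩ := hp
    obtain ⟨Q, rfl⟩ := hq
    exact ⟨P + Q, map_add _ _ _⟩
  | monomial m a =>
    refine ⟨monomial (m + 1) (a / (m + 1 : ℕ)), ?_⟩
    rw [derivative_monomial_succ, ← Nat.cast_succ,
      div_mul_cancel₀ a (Nat.cast_ne_zero.2 m.succ_ne_zero)]

theorem lagrange_interpolate_map_of_equivariant {F : Type*} [Field F] [DecidableEq F]
    {s : Finset F} {g : F → F} (σ : F ≃+* F) (hs : ∀ x ∈ s, σ.symm x ∈ s)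
    (hg : ∀ x, g (σ x) = σ (g x)) :
    (Lagrange.interpolate s id g).map (σ : F →+* F) = Lagrange.interpolate s id g := by
  have hinj : Set.InjOn id (s : Set F) := Function.injective_id.injOn
  refine Lagrange.eq_interpolate_of_eval_eq g hinj ?_ fun x hx => ?_
  · exact Polynomial.degree_map_le.trans_lt (Lagrange.degree_interpolate_lt g hinj)
  · have hx' : eval (σ.symm x) (Lagrange.interpolate s id g) = g (σ.symm x) :=
      Lagrange.eval_interpolate_at_node (v := id) g hinj (hs x hx)
    calc eval x ((Lagrange.interpolate s id g).map (σ : F →+* F))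
        = σ (eval (σ.symm x) (Lagrange.interpolate s id g)) := by
          simpa using eval_map_apply (p := Lagrange.interpolate s id g) (f := (σ : F →+* F))
            (σ.symm x)
      _ = g x := by rw [hx', ← hg, σ.apply_symm_apply]

theorem exists_aeval_eq_of_galois_equivariant {K L : Type*} [Field K] [Field L] [Algebra K L]
    [IsGalois K L] {g : L → L} (hg : ∀ (σ : Gal(L/K)) (x : L), g (σ x) = σ (g x)) (s : Finset L) :
    ∃ q : K[X], ∀ x ∈ s, aeval x q = g x := by
  classical
  let t : Finset L := s.biUnion fun x => ((minpoly K x).aroots L).toFinset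
  have hst : s ⊆ t := fun x hx => Finset.mem_biUnion.2 ⟨x, hx, by
    simpa using minpoly.ne_zero (Algebra.IsIntegral.isIntegral x)⟩
  have ht : ∀ (σ : Gal(L/K)), ∀ x ∈ t, σ.symm x ∈ t := by
    intro σ x hx
    simp only [t, Finset.mem_biUnion, Multiset.mem_toFinset, mem_aroots] at hx ⊢
    obtain ⟨y, hy, hy0, hxy⟩ := hx
    exact ⟨y, hy, hy0, by rw [aeval_algHom_apply, hxy, map_zero]⟩
  have hfixed : ∀ σ : Gal(L/K), (Lagrange.interpolate t id g).map ((σ : L ≃+* L) : L →+* L) =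
      Lagrange.interpolate t id g := fun σ =>
    lagrange_interpolate_map_of_equivariant (σ : L ≃+* L) (ht σ) (hg σ)
  have hlifts : Lagrange.interpolate t id g ∈ lifts (algebraMap K L) :=
    (lifts_iff_coeff_lifts _).2 fun m =>
      (InfiniteGalois.mem_range_algebraMap_iff_fixed _).2 fun σ => by
        conv_rhs => rw [← hfixed σ]
        rw [Polynomial.coeff_map]
        rfl
  obtain ⟨q, hq⟩ := (mem_lifts _).1 hlifts
  refine ⟨q, fun x hx => ?_⟩
  rw [← Polynomial.aeval_map_algebraMap L, hq, Polynomial.coe_aeval_eq_eval]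
  exact Lagrange.eval_interpolate_at_node g Function.injective_id.injOn (hst hx)

theorem exists_aeval_derivative_eq_im_mul_I (s : Finset ℂ) :
    ∃ P : ℝ[X], ∀ w ∈ s, aeval w (derivative P) = w.im * Complex.I := by
  have : Algebra.IsQuadraticExtension ℝ ℂ := ⟨Complex.finrank_real_complex⟩
  have hequiv (σ : Gal(ℂ/ℝ)) (w : ℂ) : ((σ w).im * Complex.I : ℂ) = σ (w.im * Complex.I) := by
    rcases Complex.real_algHom_eq_id_or_conj (σ : ℂ →ₐ[ℝ] ℂ) with h | h
    · have hσ (u : ℂ) : σ u = u := DFunLike.congr_fun h u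
      rw [hσ, hσ]
    · have hσ (u : ℂ) : σ u = (starRingEnd ℂ) u := DFunLike.congr_fun h u
      simp [hσ]
  obtain ⟨q, hq⟩ := exists_aeval_eq_of_galois_equivariant (K := ℝ)
    (g := fun w : ℂ => (w.im : ℂ) * Complex.I) hequiv s
  obtain ⟨P, rfl⟩ := polynomial_derivative_surjective q
  exact ⟨P, hq⟩

end Polynomial

theorem derivation_aeval_eq_sum_pderiv {R A M σ : Type*} [CommSemiring R] [CommSemiring A]
    [Algebra R A] [AddCommMonoid M] [Module A M] [Module R M] [Fintype σ]
    (D : Derivation R A M) (a : σ → A) (p : MvPolynomial σ R) :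
    D (aeval a p) = ∑ i, aeval a (pderiv i p) • D (a i) := by
  classical
  induction p using MvPolynomial.induction_on with
  | C r => simp
  | add p q hp hq => simp only [map_add, hp, hq, add_smul, Finset.sum_add_distrib]
  | mul_X p k hp =>
    simp [hp, add_smul, Finset.sum_add_distrib, Finset.smul_sum, mul_smul, pderiv_X,
      Pi.single_apply, apply_ite (aeval a), ite_smul]

theorem sum_sq_vecMul_of_mul_transpose_eq_one {ι κ R : Type*} [Fintype ι] [Fintype κ]
    [DecidableEq ι] [CommSemiring R] {M : Matrix ι κ R} (hM : M * M.transpose = 1) (v : ι → R) :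
    ∑ j, (Matrix.vecMul v M j) ^ 2 = ∑ i, v i ^ 2 := by
  simp only [sq]
  change Matrix.vecMul v M ⬝ᵥ Matrix.vecMul v M = v ⬝ᵥ v
  rw [← Matrix.mulVec_transpose M v, Matrix.dotProduct_mulVec, Matrix.mulVec_transpose,
    Matrix.vecMul_vecMul, hM, Matrix.vecMul_one]

section polyAct

variable {n : ℕ}

theorem polyAct_X (σ : Matrix.GeneralLinearGroup (Fin n) ℝ) (i : Fin n) :
    polyAct σ (X i) = ∑ j, (σ⁻¹).val i j • X j := by
  rw [polyAct, aeval_X]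

theorem polyAct_one (p : MvPolynomial (Fin n) ℝ) : polyAct 1 p = p := by
  have : polyAct (1 : Matrix.GeneralLinearGroup (Fin n) ℝ) = AlgHom.id ℝ _ := by
    ext1 i
    simp [polyAct_X, Matrix.one_apply]
  rw [this, AlgHom.id_apply]

theorem polyAct_mul (σ τ : Matrix.GeneralLinearGroup (Fin n) ℝ) (p : MvPolynomial (Fin n) ℝ) :
    polyAct (σ * τ) p = polyAct σ (polyAct τ p) := by
  have : polyAct (σ * τ) = (polyAct σ).comp (polyAct τ) := by
    ext1 i
    simp only [AlgHom.comp_apply, polyAct_X, map_sum, map_smul, mul_inv_rev, Units.val_mul,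
      Matrix.mul_apply, Finset.sum_smul, Finset.smul_sum, smul_smul]
    exact Finset.sum_comm
  rw [this, AlgHom.comp_apply]

theorem pderiv_polyAct_X (σ : Matrix.GeneralLinearGroup (Fin n) ℝ) (i j : Fin n) :
    pderiv j (polyAct σ (X i)) = C ((σ⁻¹).val i j) := by
  simp [polyAct_X, pderiv_X, Pi.single_apply, smul_eq_C_mul]

theorem pderiv_polyAct (σ : Matrix.GeneralLinearGroup (Fin n) ℝ) (j : Fin n)
    (p : MvPolynomial (Fin n) ℝ) :
    pderiv j (polyAct σ p) = ∑ i, polyAct σ (pderiv i p) * C ((σ⁻¹).val i j) := by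
  simp only [← pderiv_polyAct_X, polyAct_X]
  exact derivation_aeval_eq_sum_pderiv (pderiv j) _ p

theorem gradSq_polyAct {σ : Matrix.GeneralLinearGroup (Fin n) ℝ}
    (hσ : σ.val.transpose * σ.val = (1 : Matrix (Fin n) (Fin n) ℝ))
    (p : MvPolynomial (Fin n) ℝ) : gradSq (polyAct σ p) = polyAct σ (gradSq p) := by
  let M : Matrix (Fin n) (Fin n) (MvPolynomial (Fin n) ℝ) := (σ⁻¹).val.map C
  have hinv : (σ⁻¹).val = σ.val.transpose := by
    rw [Matrix.coe_units_inv]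
    exact Matrix.inv_eq_left_inv hσ
  have hM : M * M.transpose = 1 := by
    rw [← Matrix.transpose_map, ← Matrix.map_mul, hinv, Matrix.transpose_transpose, hσ]
    exact Matrix.map_one _ (map_zero C) (map_one C)
  calc gradSq (polyAct σ p)
      = ∑ j, (Matrix.vecMul (fun i => polyAct σ (pderiv i p)) M j) ^ 2 :=
        Finset.sum_congr rfl fun j _ => congrArg (· ^ 2) (pderiv_polyAct σ j p)
    _ = ∑ i, polyAct σ (pderiv i p) ^ 2 := sum_sq_vecMul_of_mul_transpose_eq_one hM _
    _ = polyAct σ (gradSq p) := by simp only [gradSq, map_sum, map_pow]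

theorem gradSq_mem_invariants {G : Subgroup (Matrix.GeneralLinearGroup (Fin n) ℝ)}
    (hO : ∀ σ ∈ G, σ.val.transpose * σ.val = (1 : Matrix (Fin n) (Fin n) ℝ))
    {f : MvPolynomial (Fin n) ℝ} (hf : f ∈ invariants G) : gradSq f ∈ invariants G :=
  fun σ hσ => by rw [← gradSq_polyAct (hO σ hσ), hf σ hσ]

theorem invariants_anti {G H : Subgroup (Matrix.GeneralLinearGroup (Fin n) ℝ)} (hHG : H ≤ G) :
    invariants G ≤ invariants H :=
  fun _ hp σ hσ => hp σ (hHG hσ)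

theorem isIntegral_invariants (G : Subgroup (Matrix.GeneralLinearGroup (Fin n) ℝ)) [Finite G] :
    Algebra.IsIntegral (invariants G) (MvPolynomial (Fin n) ℝ) := by
  let : MulSemiringAction G (MvPolynomial (Fin n) ℝ) :=
    { smul := fun σ p => polyAct σ.1 p
      one_smul := polyAct_one
      mul_smul := fun σ τ => polyAct_mul σ.1 τ.1
      smul_zero := fun σ => map_zero (polyAct σ.1)
      smul_add := fun σ => map_add (polyAct σ.1)
      smul_one := fun σ => map_one (polyAct σ.1)
      smul_mul := fun σ => map_mul (polyAct σ.1) }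
  have : Algebra.IsInvariant (invariants G) (MvPolynomial (Fin n) ℝ) G :=
    ⟨fun b hb => ⟨⟨b, fun σ hσ => hb ⟨σ, hσ⟩⟩, rfl⟩⟩
  exact Algebra.IsInvariant.isIntegral (invariants G) (MvPolynomial (Fin n) ℝ) G

theorem isIntegral_of_invariants_le {G : Subgroup (Matrix.GeneralLinearGroup (Fin n) ℝ)} [Finite G]
    {A : Subalgebra ℝ (MvPolynomial (Fin n) ℝ)} (hGA : invariants G ≤ A) :
    Algebra.IsIntegral A (MvPolynomial (Fin n) ℝ) := by
  have := isIntegral_invariants G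
  let : Algebra (invariants G) A := (Subalgebra.inclusion hGA).toAlgebra
  have : IsScalarTower (invariants G) A (MvPolynomial (Fin n) ℝ) := .of_algebraMap_eq fun _ => rfl
  exact Algebra.IsIntegral.tower_top (invariants G)

section OrbitSum

variable (G : Subgroup (Matrix.GeneralLinearGroup (Fin n) ℝ))

/-- The matrix whose row `τ` is the coefficient vector of the linear form `τ · X k`. -/
def orbitMatrix (k : Fin n) : Matrix G (Fin n) ℝ :=
  .of fun τ => (τ.1⁻¹).val k

theorem im_aeval_polyAct_X (z : Fin n → ℂ) (k : Fin n) (τ : G) :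
    (aeval z (polyAct τ.1 (X k))).im = (orbitMatrix G k).mulVec (fun j => (z j).im) τ := by
  simp [polyAct_X, orbitMatrix, Matrix.mulVec, dotProduct]

variable [Fintype G]

/-- The sum `∑ τ ∈ G, τ · p`, which turns any polynomial into a `G`-invariant one. It is `|G|`
times the Reynolds operator: the normalisation would only rescale gradients. -/
noncomputable def orbitSum (p : MvPolynomial (Fin n) ℝ) : MvPolynomial (Fin n) ℝ :=
  ∑ τ : G, polyAct τ.1 p

theorem orbitSum_mem_invariants (p : MvPolynomial (Fin n) ℝ) : orbitSum G p ∈ invariants G := by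
  intro σ hσ
  simp only [orbitSum, map_sum, ← polyAct_mul]
  exact Equiv.sum_comp (Equiv.mulLeft (⟨σ, hσ⟩ : G)) fun τ : G => polyAct τ.1 p

theorem pderiv_orbitSum_aeval_X (P : Polynomial ℝ) (k j : Fin n) :
    pderiv j (orbitSum G (Polynomial.aeval (X k) P)) =
      ∑ τ : G, Polynomial.aeval (polyAct τ.1 (X k)) P.derivative * C (orbitMatrix G k τ j) := by
  simp only [orbitSum, map_sum, ← Polynomial.aeval_algHom_apply, Derivation.map_aeval,
    pderiv_polyAct_X, smul_eq_mul]
  rfl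

end OrbitSum

theorem im_eq_zero_of_gradSq_nonneg (G : Subgroup (Matrix.GeneralLinearGroup (Fin n) ℝ)) [Finite G]
    (z : Fin n → ℂ) (hz : ∀ f ∈ invariants G, 0 ≤ (aeval z (gradSq f)).re) (k : Fin n) :
    (z k).im = 0 := by
  classical
  have := Fintype.ofFinite G
  let A := orbitMatrix G k
  let y : Fin n → ℝ := fun j => (z j).im
  obtain ⟨P, hP⟩ := exists_aeval_derivative_eq_im_mul_I
    (Finset.univ.image fun τ : G => aeval z (polyAct τ.1 (X k)))
  let f := orbitSum G (Polynomial.aeval (X k) P)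
  have hgrad (j : Fin n) :
      aeval z (pderiv j f) = (A.transpose.mulVec (A.mulVec y) j : ℂ) * Complex.I := by
    have hτ (τ : G) : Polynomial.aeval (aeval z (polyAct τ.1 (X k))) P.derivative =
        (A.mulVec y τ : ℂ) * Complex.I := by
      rw [hP _ (Finset.mem_image_of_mem _ (Finset.mem_univ τ)), im_aeval_polyAct_X]
    simp only [f, pderiv_orbitSum_aeval_X, map_sum, map_mul, ← Polynomial.aeval_algHom_apply, hτ,
      algHom_C, Matrix.mulVec_transpose, Matrix.vecMul, dotProduct, Complex.ofReal_sum,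
      Complex.ofReal_mul, Finset.sum_mul]
    exact Finset.sum_congr rfl fun τ _ => mul_right_comm _ _ _
  have hgradSq : (aeval z (gradSq f)).re = -∑ j, A.transpose.mulVec (A.mulVec y) j ^ 2 := by
    simp [gradSq, hgrad, mul_pow, ← Complex.ofReal_pow]
  have hAAy : A.transpose.mulVec (A.mulVec y) = 0 := by
    have hle : ∑ j, A.transpose.mulVec (A.mulVec y) j ^ 2 ≤ 0 := by
      simpa only [hgradSq, neg_nonneg] using hz f (orbitSum_mem_invariants G _)
    have hsq := (Finset.sum_eq_zero_iff_of_nonneg fun j _ => sq_nonneg _).1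
      (hle.antisymm (Finset.sum_nonneg fun j _ => sq_nonneg _))
    exact funext fun j => pow_eq_zero_iff two_ne_zero |>.1 (hsq j (Finset.mem_univ j))
  have hAy : A.mulVec y = 0 := by
    rwa [← Matrix.conjTranspose_mul_self_mulVec_eq_zero, ← Matrix.mulVec_mulVec]
  calc (z k).im = (aeval z (polyAct (1 : G).1 (X k))).im := by simp [polyAct_one]
    _ = A.mulVec y 1 := im_aeval_polyAct_X G z k 1
    _ = 0 := congrFun hAy 1

theorem realRingHom_algebraMap {A : Type*} [Semiring A] [Algebra ℝ A] (φ : A →+* ℝ) (r : ℝ) :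
    φ (algebraMap ℝ A r) = r :=
  DFunLike.congr_fun (Subsingleton.elim (φ.comp (algebraMap ℝ A)) (RingHom.id ℝ)) r

theorem exists_eq_aeval_of_gradSq_nonneg {G : Subgroup (Matrix.GeneralLinearGroup (Fin n) ℝ)}
    [Finite G] (hO : ∀ σ ∈ G, σ.val.transpose * σ.val = (1 : Matrix (Fin n) (Fin n) ℝ))
    {A : Subalgebra ℝ (MvPolynomial (Fin n) ℝ)} (hGA : invariants G ≤ A) (φ : A →+* ℝ)
    (hφ : ∀ f ∈ invariants G, ∀ h : gradSq f ∈ A, 0 ≤ φ ⟨gradSq f, h⟩) :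
    ∃ x : Fin n → ℝ, ∀ p : A, φ p = aeval x (p : MvPolynomial (Fin n) ℝ) := by
  have := isIntegral_of_invariants_le hGA
  let φℂ : A →ₐ[ℝ] ℂ := Complex.ofRealAm.comp { φ with commutes' := realRingHom_algebraMap φ }
  obtain ⟨ψ, hψ⟩ := exists_algHom_extending_of_isIntegral (S := MvPolynomial (Fin n) ℝ) φℂ
  let z : Fin n → ℂ := fun k => ψ (X k)
  have hz (p : A) : aeval z (p : MvPolynomial (Fin n) ℝ) = (φ p : ℂ) := by
    calc aeval z (p : MvPolynomial (Fin n) ℝ) = ψ p := by rw [aeval_unique ψ]; rfl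
      _ = φ p := hψ p
  have him : ∀ k, (z k).im = 0 := im_eq_zero_of_gradSq_nonneg G z fun f hf => by
    have hfA : gradSq f ∈ A := hGA (gradSq_mem_invariants hO hf)
    simpa [hz ⟨gradSq f, hfA⟩] using hφ f hf hfA
  let x : Fin n → ℝ := fun k => (z k).re
  have hzx : z = algebraMap ℝ ℂ ∘ x := funext fun k => Complex.ext rfl (him k)
  refine ⟨x, fun p => Complex.ofReal_injective ?_⟩
  calc (φ p : ℂ) = aeval (algebraMap ℝ ℂ ∘ x) (p : MvPolynomial (Fin n) ℝ) := by rw [← hz, hzx]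
    _ = (aeval x (p : MvPolynomial (Fin n) ℝ) : ℝ) := aeval_algebraMap_apply ℂ x p.1

end polyAct

theorem statement_5_general {n : ℕ} {G : Subgroup (Matrix.GeneralLinearGroup (Fin n) ℝ)} [Finite G]
    (hO : ∀ σ ∈ G, σ.val.transpose * σ.val = (1 : Matrix (Fin n) (Fin n) ℝ))
    {A : Subalgebra ℝ (MvPolynomial (Fin n) ℝ)} (hGA : invariants G ≤ A) (φ : A →+* ℝ)
    (hφ : ∀ f ∈ invariants G, ∀ h : gradSq f ∈ A, 0 ≤ φ ⟨gradSq f, h⟩)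
    (f : MvPolynomial (Fin n) ℝ) (h : gradSq f ∈ A) : 0 ≤ φ ⟨gradSq f, h⟩ := by
  obtain ⟨x, hx⟩ := exists_eq_aeval_of_gradSq_nonneg hO hGA φ hφ
  calc 0 ≤ ∑ j, aeval x (pderiv j f) ^ 2 := Finset.sum_nonneg fun j _ => sq_nonneg _
    _ = φ ⟨gradSq f, h⟩ := by simp only [hx, gradSq, map_sum, map_pow]

/-- for `G ⊆ O_n(ℝ)` finite, `H ≤ G`, if `φ : ℝ[X]^G → ℝ` satisfies
`φ(∑ⱼ(∂f/∂Xⱼ)²) ≥ 0` for all `f ∈ ℝ[X]^G` and extends to `φ_H : ℝ[X]^H → ℝ`, then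
`φ_H(∑ⱼ(∂h/∂Xⱼ)²) ≥ 0` for all `h ∈ ℝ[X]^H`. -/
theorem statement_5 {n : ℕ} (hn : 1 ≤ n)
    (G H : Subgroup (Matrix.GeneralLinearGroup (Fin n) ℝ)) [Finite G] (hHG : H ≤ G)
    (hO : ∀ σ ∈ G, σ.val.transpose * σ.val = (1 : Matrix (Fin n) (Fin n) ℝ))
    (φ : invariants G →+* ℝ)
    (hpos : ∀ (f : MvPolynomial (Fin n) ℝ), f ∈ invariants G →
      ∀ (h : gradSq f ∈ invariants G), 0 ≤ φ ⟨gradSq f, h⟩)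
    (φH : invariants H →+* ℝ)
    (hext : ∀ (f : MvPolynomial (Fin n) ℝ) (hfG : f ∈ invariants G) (hfH : f ∈ invariants H),
      φH ⟨f, hfH⟩ = φ ⟨f, hfG⟩) :
    ∀ (f : MvPolynomial (Fin n) ℝ), f ∈ invariants H →
      ∀ (h : gradSq f ∈ invariants H), 0 ≤ φH ⟨gradSq f, h⟩ := by
  exact fun f _ h => statement_5_general hO (invariants_anti hHG) φH
    (fun g hg hgH => hext _ (gradSq_mem_invariants hO hg) hgH ▸ hpos g hg _) f h
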